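/- Mass scaling method of Hoffmann et al.: with m = 24 degrees of freedom per element, let K = Σ_{e=1}^N L_e^T·K_e·L_e with each K_e ∈ ℝ^{24×24} symmetric positive semidefinite; for each e let m_e > 0 and set M_e = (m_e/8)·I_24 and E_e = I_3 ⊗ [(β·m_e/32)·(A ⊗ G)], where β ≥ 0, A = [[1,−1],[−1,1]] ∈ ℝ^{2×2} and G = [[4,2,1,2],[2,4,2,1],[1,2,4,2],[2,1,2,4]] ∈ ℝ^{4×4}; let M = Σ_{e=1}^N L_e^T·M_e·L_e and M̄ = Σ_{e=1}^N L_e^T·(M_e + E_e)·L_e. Then: (1) for every i = 1,…,n, λ_i(K, M̄) ≤ λ_i(K, M) ≤ (1 + 9β/2)·λ_i(K, M̄), i.e. 1 ≤ ω_i/ω̄_i ≤ √(1 + 9β/2) wherever ω̄_i > 0; and (2) κ(M̄)/κ(M) ≤ 1 + 9β/2. -/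

import Mathlib

open Matrix Kronecker

/-- The eigenvalues of a symmetric real matrix listed in ascending order with multiplicity. -/
noncomputable def sortedEigs {n : ℕ} (M : Matrix (Fin n) (Fin n) ℝ) : Fin n → ℝ :=
  if h : M.IsHermitian then h.eigenvalues ∘ Tuple.sort h.eigenvalues else 0

-- The generalized eigenvalues `λ_1(A,B) ≤ … ≤ λ_n(A,B)`: the eigenvalues of
-- `B^{-1/2} A B^{-1/2}` in ascending order with multiplicity (`B` positive definite).
open Classical MatrixOrder in
noncomputable def genEigs {n : ℕ} (A B : Matrix (Fin n) (Fin n) ℝ) : Fin n → ℝ :=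
  if hB : B.PosDef then sortedEigs ((CFC.sqrt B)⁻¹ * A * (CFC.sqrt B)⁻¹) else 0

/-- The spectral condition number `κ(A) = λ_max(A)/λ_min(A)`. -/
noncomputable def specCond {n : ℕ} (M : Matrix (Fin (n+1)) (Fin (n+1)) ℝ) : ℝ :=
  sortedEigs M (Fin.last n) / sortedEigs M 0

/-- The Boolean connectivity matrix `L_e` of an element whose local-to-global map is `σ`:
its rows are the standard basis vectors of `ℝ^n` selected by `σ`. -/
def elemL {ι : Type*} {n : ℕ} (σ : ι → Fin n) : Matrix ι (Fin n) ℝ :=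
  Matrix.of fun i j => if σ i = j then 1 else 0

lemma spectral_aux {n : ℕ} (S : Matrix (Fin n) (Fin n) ℝ) (hS : S.IsHermitian) :
    ∃ C : Matrix (Fin n) (Fin n) ℝ, ∀ x : Fin n → ℝ,
      x ⬝ᵥ (S *ᵥ x) = ∑ j, sortedEigs S j * ((C *ᵥ x) j) ^ 2 ∧
      x ⬝ᵥ x = ∑ j, ((C *ᵥ x) j) ^ 2 := by
  set U : Matrix (Fin n) (Fin n) ℝ := (hS.eigenvectorUnitary : Matrix (Fin n) (Fin n) ℝ) with hU
  have hUU : U * Uᵀ = 1 := by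
    have := Unitary.coe_mul_star_self hS.eigenvectorUnitary
    rw [Unitary.coe_star, star_eq_conjTranspose, conjTranspose_eq_transpose_of_trivial] at this
    exact this
  have hSd : S = U * diagonal hS.eigenvalues * Uᵀ := by
    have := hS.spectral_theorem
    rw [Unitary.conjStarAlgAut_apply] at this
    rw [star_eq_conjTranspose, conjTranspose_eq_transpose_of_trivial] at this
    simpa using this
  set p := Tuple.sort hS.eigenvalues with hp
  refine ⟨Uᵀ.submatrix p id, fun x => ?_⟩
  have hs : ∀ j, sortedEigs S j = hS.eigenvalues (p j) := by
    intro j; rw [sortedEigs, dif_pos hS]; rfl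
  have hc : ∀ j, ((Uᵀ.submatrix p id) *ᵥ x) j = (Uᵀ *ᵥ x) (p j) := by
    intro j; simp [mulVec, dotProduct]
  simp only [hs, hc]
  constructor
  · rw [Equiv.sum_comp p (fun j => hS.eigenvalues j * ((Uᵀ *ᵥ x) j) ^ 2)]
    conv_lhs => rw [hSd]
    rw [← mulVec_mulVec, ← mulVec_mulVec, dotProduct_mulVec, ← mulVec_transpose]
    simp only [dotProduct, mulVec_diagonal]
    refine Finset.sum_congr rfl fun j _ => ?_
    ring
  · rw [Equiv.sum_comp p (fun j => ((Uᵀ *ᵥ x) j) ^ 2)]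
    have h1 : x ⬝ᵥ x = x ⬝ᵥ ((U * Uᵀ) *ᵥ x) := by rw [hUU, one_mulVec]
    rw [h1, ← mulVec_mulVec, dotProduct_mulVec, ← mulVec_transpose]
    simp only [dotProduct]
    refine Finset.sum_congr rfl fun j _ => ?_
    ring

lemma sortedEigs_mono {n : ℕ} (S : Matrix (Fin n) (Fin n) ℝ) (hS : S.IsHermitian) :
    Monotone (sortedEigs S) := by
  have : sortedEigs S = hS.eigenvalues ∘ Tuple.sort hS.eigenvalues := by
    rw [sortedEigs, dif_pos hS]
  rw [this]
  exact Tuple.monotone_sort _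

lemma minmax_aux {n : ℕ} (S T P : Matrix (Fin n) (Fin n) ℝ) (hS : S.IsHermitian)
    (hT : T.IsHermitian) (i : Fin n) :
    ∃ x : Fin n → ℝ, x ≠ 0 ∧ sortedEigs S i * (x ⬝ᵥ x) ≤ x ⬝ᵥ (S *ᵥ x) ∧
      (P *ᵥ x) ⬝ᵥ (T *ᵥ (P *ᵥ x)) ≤ sortedEigs T i * ((P *ᵥ x) ⬝ᵥ (P *ᵥ x)) := by
  obtain ⟨C, hC⟩ := spectral_aux S hS
  obtain ⟨D, hD⟩ := spectral_aux T hT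
  let f : (Fin n → ℝ) →ₗ[ℝ] ({j : Fin n // j ≠ i} → ℝ) :=
    LinearMap.pi fun j => if j.1 < i then (LinearMap.proj j.1).comp (C.mulVecLin)
      else (LinearMap.proj j.1).comp ((D * P).mulVecLin)
  have hlt : Module.finrank ℝ ({j : Fin n // j ≠ i} → ℝ) < Module.finrank ℝ (Fin n → ℝ) := by
    simp only [Module.finrank_fintype_fun_eq_card]
    exact Fintype.card_subtype_lt (x := i) (by simp)
  have hker := LinearMap.ker_ne_bot_of_finrank_lt (f := f) hlt
  obtain ⟨x, hx, hx0⟩ := (Submodule.ne_bot_iff _).1 hker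
  have hf : ∀ j : {j : Fin n // j ≠ i}, f x j = 0 := fun j => by
    rw [LinearMap.mem_ker.1 hx]; rfl
  have h1 : ∀ j, j < i → (C *ᵥ x) j = 0 := by
    intro j hj
    have := hf ⟨j, hj.ne⟩
    simpa [f, hj] using this
  have h2 : ∀ j, i < j → (D *ᵥ (P *ᵥ x)) j = 0 := by
    intro j hj
    have := hf ⟨j, hj.ne'⟩
    simpa [f, hj.le.not_gt, not_lt.2 hj.le] using this
  refine ⟨x, hx0, ?_, ?_⟩
  · rw [(hC x).1, (hC x).2, Finset.mul_sum]
    refine Finset.sum_le_sum fun j _ => ?_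
    rcases lt_or_ge j i with h | h
    · simp [h1 j h]
    · exact mul_le_mul_of_nonneg_right (sortedEigs_mono S hS h) (sq_nonneg _)
  · rw [(hD _).1, (hD _).2, Finset.mul_sum]
    refine Finset.sum_le_sum fun j _ => ?_
    rcases lt_or_ge i j with h | h
    · simp [h2 j h]
    · exact mul_le_mul_of_nonneg_right (sortedEigs_mono T hT h) (sq_nonneg _)

lemma dot_pos {n : ℕ} {x : Fin n → ℝ} (hx : x ≠ 0) : 0 < x ⬝ᵥ x := by
  have h0 : 0 ≤ x ⬝ᵥ x := Finset.sum_nonneg fun i _ => mul_self_nonneg (x i)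
  exact lt_of_le_of_ne h0 fun h => hx (dotProduct_self_eq_zero.1 h.symm)

lemma sortedEigs_le {n : ℕ} (S T : Matrix (Fin n) (Fin n) ℝ) (hS : S.IsHermitian)
    (hT : T.IsHermitian) (c : ℝ) (h : ∀ x, x ⬝ᵥ (S *ᵥ x) ≤ c * (x ⬝ᵥ (T *ᵥ x))) (hc : 0 ≤ c)
    (i : Fin n) : sortedEigs S i ≤ c * sortedEigs T i := by
  obtain ⟨x, hx, h1, h2⟩ := minmax_aux S T 1 hS hT i
  rw [one_mulVec] at h2
  have := dot_pos hx
  have h3 := mul_le_mul_of_nonneg_left h2 hc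
  have h4 := h x
  refine le_of_mul_le_mul_right (a := x ⬝ᵥ x) ?_ this
  linarith

lemma sortedEigs_pos {n : ℕ} (S : Matrix (Fin n) (Fin n) ℝ) (hS : S.PosDef) (i : Fin n) :
    0 < sortedEigs S i := by
  have : sortedEigs S = hS.1.eigenvalues ∘ Tuple.sort hS.1.eigenvalues := by
    rw [sortedEigs, dif_pos hS.1]
  rw [this]
  exact hS.eigenvalues_pos _

lemma sortedEigs_nonneg {n : ℕ} (S : Matrix (Fin n) (Fin n) ℝ) (hS : S.PosSemidef) (i : Fin n) :
    0 ≤ sortedEigs S i := by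
  have : sortedEigs S = hS.1.eigenvalues ∘ Tuple.sort hS.1.eigenvalues := by
    rw [sortedEigs, dif_pos hS.1]
  rw [this]
  exact hS.eigenvalues_nonneg _

open MatrixOrder in
lemma genEigs_aux {n : ℕ} (B : Matrix (Fin n) (Fin n) ℝ) (hB : B.PosDef) :
    ∃ R Q : Matrix (Fin n) (Fin n) ℝ, Rᵀ = R ∧ Qᵀ = Q ∧ R * R = B ∧ R * Q = 1 ∧ Q * R = 1 ∧
      ∀ A, genEigs A B = sortedEigs (Q * A * Q) := by
  have hB0 : 0 ≤ B := Matrix.nonneg_iff_posSemidef.2 hB.posSemidef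
  have hRR : CFC.sqrt B * CFC.sqrt B = B := CFC.sqrt_mul_sqrt_self B hB0
  have hR : (CFC.sqrt B).PosSemidef := Matrix.nonneg_iff_posSemidef.1 (CFC.sqrt_nonneg B)
  have hRt : (CFC.sqrt B)ᵀ = CFC.sqrt B := by
    have := hR.1
    rwa [IsHermitian, conjTranspose_eq_transpose_of_trivial] at this
  have hdet : IsUnit (CFC.sqrt B).det := by
    rw [isUnit_iff_ne_zero]
    intro h
    have := hB.det_pos
    rw [← hRR, det_mul, h] at this
    simp at this
  refine ⟨CFC.sqrt B, (CFC.sqrt B)⁻¹, hRt, ?_, hRR, mul_nonsing_inv _ hdet,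
    nonsing_inv_mul _ hdet, fun A => ?_⟩
  · rw [transpose_nonsing_inv, hRt]
  · simp [genEigs, hB]

lemma conj_psd {n : ℕ} {A Q : Matrix (Fin n) (Fin n) ℝ} (hA : A.PosSemidef) (hQ : Qᵀ = Q) :
    (Q * A * Q).PosSemidef := by
  have := hA.conjTranspose_mul_mul_same Q
  rwa [conjTranspose_eq_transpose_of_trivial, hQ] at this

lemma genEigs_nonneg {n : ℕ} (A B : Matrix (Fin n) (Fin n) ℝ) (hA : A.PosSemidef)
    (hB : B.PosDef) (i : Fin n) : 0 ≤ genEigs A B i := by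
  obtain ⟨R, Q, hR, hQ, hRR, hRQ, hQR, hg⟩ := genEigs_aux B hB
  rw [hg]
  exact sortedEigs_nonneg _ (conj_psd hA hQ) i

lemma quad_sym {n : ℕ} {A Q : Matrix (Fin n) (Fin n) ℝ} (hQ : Qᵀ = Q) (x : Fin n → ℝ) :
    x ⬝ᵥ ((Q * A * Q) *ᵥ x) = (Q *ᵥ x) ⬝ᵥ (A *ᵥ (Q *ᵥ x)) := by
  rw [← mulVec_mulVec, ← mulVec_mulVec, dotProduct_mulVec, ← mulVec_transpose, hQ]

lemma genEigs_le {n : ℕ} (A B₁ B₂ : Matrix (Fin n) (Fin n) ℝ) (hA : A.PosSemidef)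
    (hB₁ : B₁.PosDef) (hB₂ : B₂.PosDef) (c : ℝ)
    (h : ∀ x, x ⬝ᵥ (B₁ *ᵥ x) ≤ c * (x ⬝ᵥ (B₂ *ᵥ x))) (i : Fin n) :
    genEigs A B₂ i ≤ c * genEigs A B₁ i := by
  have hnn := genEigs_nonneg A B₁ hA hB₁ i
  obtain ⟨R₁, Q₁, hR₁, hQ₁, hRR₁, hRQ₁, hQR₁, hg₁⟩ := genEigs_aux B₁ hB₁
  obtain ⟨R₂, Q₂, hR₂, hQ₂, hRR₂, hRQ₂, hQR₂, hg₂⟩ := genEigs_aux B₂ hB₂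
  rw [hg₁] at hnn
  rw [hg₁, hg₂]
  obtain ⟨x, hx, h1, h2⟩ := minmax_aux (Q₂ * A * Q₂) (Q₁ * A * Q₁) (R₁ * Q₂)
    (conj_psd hA hQ₂).1 (conj_psd hA hQ₁).1 i
  have hpos := dot_pos hx
  have hxz : x = R₂ *ᵥ (Q₂ *ᵥ x) := by rw [mulVec_mulVec, hRQ₂, one_mulVec]
  have e1 : x ⬝ᵥ x = (Q₂ *ᵥ x) ⬝ᵥ (B₂ *ᵥ (Q₂ *ᵥ x)) := by
    have := quad_sym (A := 1) hR₂ (Q₂ *ᵥ x)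
    rw [mul_one, hRR₂, one_mulVec, ← hxz] at this
    exact this.symm
  have e2 : ((R₁ * Q₂) *ᵥ x) ⬝ᵥ ((R₁ * Q₂) *ᵥ x) = (Q₂ *ᵥ x) ⬝ᵥ (B₁ *ᵥ (Q₂ *ᵥ x)) := by
    have := quad_sym (A := 1) hR₁ (Q₂ *ᵥ x)
    rw [mul_one, hRR₁, one_mulVec, mulVec_mulVec (M := R₁)] at this
    exact this.symm
  rw [quad_sym hQ₂] at h1
  rw [quad_sym hQ₁, e2, mulVec_mulVec (M := Q₁), ← mul_assoc, hQR₁, one_mul] at h2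
  have h3 := mul_le_mul_of_nonneg_left (h (Q₂ *ᵥ x)) hnn
  refine le_of_mul_le_mul_right (a := x ⬝ᵥ x) ?_ hpos
  rw [← e1] at h3
  linarith

lemma elemL_mulVec {ι : Type*} {n : ℕ} (σ : ι → Fin n) (x : Fin n → ℝ) :
    elemL σ *ᵥ x = fun j => x (σ j) := by
  ext j; simp [elemL, mulVec, dotProduct]

lemma assembled_quad {ι : Type*} [Fintype ι] {N n : ℕ} (σ : Fin N → ι → Fin n)
    (X : Fin N → Matrix ι ι ℝ) (x : Fin n → ℝ) :
    x ⬝ᵥ ((∑ e, (elemL (σ e))ᵀ * X e * elemL (σ e)) *ᵥ x) =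
      ∑ e, (fun j => x (σ e j)) ⬝ᵥ (X e *ᵥ (fun j => x (σ e j))) := by
  rw [sum_mulVec, dotProduct_sum]
  refine Finset.sum_congr rfl fun e _ => ?_
  rw [← mulVec_mulVec, ← mulVec_mulVec, dotProduct_mulVec, ← mulVec_transpose,
    transpose_transpose, elemL_mulVec]

lemma assembled_herm {ι : Type*} [Fintype ι] {N n : ℕ} (σ : Fin N → ι → Fin n)
    (X : Fin N → Matrix ι ι ℝ) (hX : ∀ e, (X e)ᵀ = X e) :
    (∑ e, (elemL (σ e))ᵀ * X e * elemL (σ e)).IsHermitian := by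
  rw [IsHermitian, conjTranspose_eq_transpose_of_trivial, transpose_sum]
  refine Finset.sum_congr rfl fun e _ => ?_
  rw [transpose_mul, transpose_mul, transpose_transpose, hX, Matrix.mul_assoc]

lemma block_bound (a b : Fin 4 → ℝ) :
    let G := (!![4, 2, 1, 2; 2, 4, 2, 1; 1, 2, 4, 2; 2, 1, 2, 4] : Matrix (Fin 4) (Fin 4) ℝ)
    0 ≤ (a - b) ⬝ᵥ (G *ᵥ (a - b)) ∧
      (a - b) ⬝ᵥ (G *ᵥ (a - b)) ≤ 18 * (a ⬝ᵥ a + b ⬝ᵥ b) := by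
  intro G
  have key : ∀ d : Fin 4 → ℝ, 0 ≤ d ⬝ᵥ (G *ᵥ d) ∧ d ⬝ᵥ (G *ᵥ d) ≤ 9 * (d ⬝ᵥ d) := by
    intro d
    simp only [G, dotProduct, mulVec, Fin.sum_univ_four, of_apply, cons_val]
    constructor
    · nlinarith [sq_nonneg (d 0 + d 1 + d 2 + d 3), sq_nonneg (d 0 - d 1 + d 2 - d 3),
        sq_nonneg (d 0 - d 2), sq_nonneg (d 1 - d 3)]
    · nlinarith [sq_nonneg (d 0 + d 1 + d 2 + d 3), sq_nonneg (d 0 - d 1 + d 2 - d 3),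
        sq_nonneg (d 0 - d 2), sq_nonneg (d 1 - d 3)]
  refine ⟨(key _).1, (key _).2.trans ?_⟩
  simp only [dotProduct, Fin.sum_univ_four, Pi.sub_apply]
  nlinarith [sq_nonneg (a 0 + b 0), sq_nonneg (a 1 + b 1), sq_nonneg (a 2 + b 2),
    sq_nonneg (a 3 + b 3)]

lemma E_quad (s : ℝ) (y : Fin 3 × Fin 2 × Fin 4 → ℝ) :
    y ⬝ᵥ (((1 : Matrix (Fin 3) (Fin 3) ℝ) ⊗ₖ
      (s • ((!![1, -1; -1, 1] : Matrix (Fin 2) (Fin 2) ℝ) ⊗ₖ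
          (!![4, 2, 1, 2; 2, 4, 2, 1; 1, 2, 4, 2; 2, 1, 2, 4] : Matrix (Fin 4) (Fin 4) ℝ)))) *ᵥ y)
    = s * ∑ k : Fin 3, ((fun q => y (k, 0, q)) - (fun q => y (k, 1, q))) ⬝ᵥ
      ((!![4, 2, 1, 2; 2, 4, 2, 1; 1, 2, 4, 2; 2, 1, 2, 4] : Matrix (Fin 4) (Fin 4) ℝ) *ᵥ
        ((fun q => y (k, 0, q)) - (fun q => y (k, 1, q)))) := by
  generalize (!![4, 2, 1, 2; 2, 4, 2, 1; 1, 2, 4, 2; 2, 1, 2, 4] : Matrix (Fin 4) (Fin 4) ℝ) = G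
  simp only [dotProduct, mulVec, Fintype.sum_prod_type, kroneckerMap_apply, Matrix.smul_apply,
    smul_eq_mul, one_apply, ite_mul, one_mul, zero_mul, Finset.mul_sum]
  refine Finset.sum_congr rfl fun k _ => ?_
  simp [Fin.sum_univ_four, Fin.sum_univ_two]
  fin_cases k <;> simp [Fin.sum_univ_three] <;> ring

lemma E_bound (s : ℝ) (hs : 0 ≤ s) (y : Fin 3 × Fin 2 × Fin 4 → ℝ) :
    let E := ((1 : Matrix (Fin 3) (Fin 3) ℝ) ⊗ₖ
      (s • ((!![1, -1; -1, 1] : Matrix (Fin 2) (Fin 2) ℝ) ⊗ₖ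
          (!![4, 2, 1, 2; 2, 4, 2, 1; 1, 2, 4, 2; 2, 1, 2, 4] : Matrix (Fin 4) (Fin 4) ℝ))))
    0 ≤ y ⬝ᵥ (E *ᵥ y) ∧ y ⬝ᵥ (E *ᵥ y) ≤ s * 18 * (y ⬝ᵥ y) := by
  intro E
  have hyy : y ⬝ᵥ y = ∑ k : Fin 3, ((fun q => y (k, 0, q)) ⬝ᵥ (fun q => y (k, 0, q)) +
      (fun q => y (k, 1, q)) ⬝ᵥ (fun q => y (k, 1, q))) := by
    simp [dotProduct, Fintype.sum_prod_type, Fin.sum_univ_two]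
  rw [E_quad, hyy, mul_assoc, Finset.mul_sum Finset.univ _ (18 : ℝ)]
  exact ⟨mul_nonneg hs (Finset.sum_nonneg fun k _ => (block_bound _ _).1),
    mul_le_mul_of_nonneg_left (Finset.sum_le_sum fun k _ => (block_bound _ _).2) hs⟩

/-- **Mass scaling of Hoffmann et al. (2023)** (Corollary `bounds_hoffmann`).
Elements have `m = 24 = 3·2·4` degrees of freedom (index type `Fin 3 × (Fin 2 × Fin 4)`).
With `M_e = (m_e/8)·I_24`, `E_e = I_3 ⊗ ((β·m_e/32)·(A ⊗ G))` for
`A = [[1,−1],[−1,1]]`, `G = [[4,2,1,2],[2,4,2,1],[1,2,4,2],[2,1,2,4]]` and `β ≥ 0`,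
`K = Σ_e L_eᵀ·K_e·L_e` (each `K_e ⪰ 0` symmetric), `M = Σ_e L_eᵀ·M_e·L_e` and
`M̄ = Σ_e L_eᵀ·(M_e + E_e)·L_e`, one has for every `i`:
`λ_i(K,M̄) ≤ λ_i(K,M) ≤ (1 + 9β/2)·λ_i(K,M̄)` (equivalently `1 ≤ ω_i/ω̄_i ≤ √(1+9β/2)`
wherever `ω̄_i > 0`), and `κ(M̄)/κ(M) ≤ 1 + 9β/2`. -/
theorem hoffmann_mass_scaling_bounds {N n pmax : ℕ} (hpmax : 0 < pmax)
    (β : ℝ) (hβ : 0 ≤ β)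
    (σ : Fin (N+1) → (Fin 3 × Fin 2 × Fin 4) → Fin (n+1))
    (hinj : ∀ e, Function.Injective (σ e))
    (hcover : ∀ i : Fin (n+1), ∃ e j, σ e j = i)
    (hp : ∀ i : Fin (n+1), (Finset.univ.filter fun e => ∃ j, σ e j = i).card ≤ pmax)
    (Ke : Fin (N+1) → Matrix (Fin 3 × Fin 2 × Fin 4) (Fin 3 × Fin 2 × Fin 4) ℝ)
    (hKe : ∀ e, (Ke e).PosSemidef)
    (me : Fin (N+1) → ℝ) (hme : ∀ e, 0 < me e)
    (Me Ee : Fin (N+1) → Matrix (Fin 3 × Fin 2 × Fin 4) (Fin 3 × Fin 2 × Fin 4) ℝ)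
    (hMe : ∀ e, Me e =
      (me e / 8) • (1 : Matrix (Fin 3 × Fin 2 × Fin 4) (Fin 3 × Fin 2 × Fin 4) ℝ))
    (hEe : ∀ e, Ee e = (1 : Matrix (Fin 3) (Fin 3) ℝ) ⊗ₖ
      ((β * me e / 32) •
        ((!![1, -1; -1, 1] : Matrix (Fin 2) (Fin 2) ℝ) ⊗ₖ
          (!![4, 2, 1, 2; 2, 4, 2, 1; 1, 2, 4, 2; 2, 1, 2, 4] : Matrix (Fin 4) (Fin 4) ℝ))))
    (K M Mbar : Matrix (Fin (n+1)) (Fin (n+1)) ℝ)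
    (hK : K = ∑ e, (elemL (σ e))ᵀ * Ke e * elemL (σ e))
    (hM : M = ∑ e, (elemL (σ e))ᵀ * Me e * elemL (σ e))
    (hMbar : Mbar = ∑ e, (elemL (σ e))ᵀ * (Me e + Ee e) * elemL (σ e)) :
    (∀ i : Fin (n+1),
      (genEigs K Mbar i ≤ genEigs K M i ∧
        genEigs K M i ≤ (1 + 9 * β / 2) * genEigs K Mbar i) ∧
      (0 < genEigs K Mbar i →
        1 ≤ Real.sqrt (genEigs K M i) / Real.sqrt (genEigs K Mbar i) ∧
        Real.sqrt (genEigs K M i) / Real.sqrt (genEigs K Mbar i) ≤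
          Real.sqrt (1 + 9 * β / 2))) ∧
    specCond Mbar / specCond M ≤ 1 + 9 * β / 2 := by
  set c : ℝ := 1 + 9 * β / 2 with hc
  have hc0 : 0 < c := by positivity
  have qM : ∀ x, x ⬝ᵥ (M *ᵥ x) = ∑ e, me e / 8 * ((fun j => x (σ e j)) ⬝ᵥ fun j => x (σ e j)) := by
    intro x
    rw [hM, assembled_quad]
    refine Finset.sum_congr rfl fun e _ => ?_
    rw [hMe, smul_mulVec, one_mulVec, dotProduct_smul, smul_eq_mul]
  have hE : ∀ e (y : Fin 3 × Fin 2 × Fin 4 → ℝ),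
      0 ≤ y ⬝ᵥ (Ee e *ᵥ y) ∧ y ⬝ᵥ (Ee e *ᵥ y) ≤ (β * me e / 32) * 18 * (y ⬝ᵥ y) := by
    intro e y
    have := hme e
    rw [hEe]
    exact E_bound _ (by positivity) y
  have qMbar : ∀ x, x ⬝ᵥ (Mbar *ᵥ x) = ∑ e, (me e / 8 * ((fun j => x (σ e j)) ⬝ᵥ fun j => x (σ e j))
      + (fun j => x (σ e j)) ⬝ᵥ (Ee e *ᵥ fun j => x (σ e j))) := by
    intro x
    rw [hMbar, assembled_quad]
    refine Finset.sum_congr rfl fun e _ => ?_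
    rw [hMe, add_mulVec, dotProduct_add, smul_mulVec, one_mulVec, dotProduct_smul, smul_eq_mul]
  have hlow : ∀ x, x ⬝ᵥ (M *ᵥ x) ≤ 1 * (x ⬝ᵥ (Mbar *ᵥ x)) := by
    intro x
    rw [one_mul, qM, qMbar]
    refine Finset.sum_le_sum fun e _ => ?_
    linarith [(hE e fun j => x (σ e j)).1]
  have hupp : ∀ x, x ⬝ᵥ (Mbar *ᵥ x) ≤ c * (x ⬝ᵥ (M *ᵥ x)) := by
    intro x
    rw [qM, qMbar, Finset.mul_sum]
    refine Finset.sum_le_sum fun e _ => ?_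
    have := (hE e fun j => x (σ e j)).2
    refine (add_le_add_right this _).trans (le_of_eq ?_)
    rw [hc]; ring
  have hMeT : ∀ e, (Me e)ᵀ = Me e := by
    intro e; rw [hMe, transpose_smul, transpose_one]
  have hEeT : ∀ e, (Ee e)ᵀ = Ee e := by
    intro e
    have hA : (!![1, -1; -1, 1] : Matrix (Fin 2) (Fin 2) ℝ)ᵀ = !![1, -1; -1, 1] := by
      ext i j; fin_cases i <;> fin_cases j <;> rfl
    have hG : (!![4, 2, 1, 2; 2, 4, 2, 1; 1, 2, 4, 2; 2, 1, 2, 4] : Matrix (Fin 4) (Fin 4) ℝ)ᵀ =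
        !![4, 2, 1, 2; 2, 4, 2, 1; 1, 2, 4, 2; 2, 1, 2, 4] := by
      ext i j; fin_cases i <;> fin_cases j <;> rfl
    rw [hEe, ← kroneckerMap_transpose, transpose_smul, ← kroneckerMap_transpose, hA, hG,
      transpose_one]
  have hMh : M.IsHermitian := hM ▸ assembled_herm σ Me hMeT
  have hMbarh : Mbar.IsHermitian := hMbar ▸ assembled_herm σ (fun e => Me e + Ee e)
    (fun e => by rw [transpose_add, hMeT, hEeT])
  have hMpos : ∀ x : Fin (n+1) → ℝ, x ≠ 0 → 0 < x ⬝ᵥ (M *ᵥ x) := by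
    intro x hx
    obtain ⟨i, hi⟩ := Function.ne_iff.1 hx
    obtain ⟨e, j, hj⟩ := hcover i
    have hnn : ∀ e, 0 ≤ (fun j => x (σ e j)) ⬝ᵥ fun j => x (σ e j) := fun e =>
      Finset.sum_nonneg fun i _ => mul_self_nonneg _
    rw [qM]
    refine Finset.sum_pos' (fun e _ => mul_nonneg (by linarith [hme e]) (hnn e))
      ⟨e, Finset.mem_univ _, mul_pos (by linarith [hme e]) ?_⟩
    refine Finset.sum_pos' (fun i _ => mul_self_nonneg _) ⟨j, Finset.mem_univ _, ?_⟩
    beta_reduce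
    rw [hj]
    exact mul_self_pos.2 hi
  have hMpd : M.PosDef := .of_dotProduct_mulVec_pos hMh fun x hx => by
    simpa using hMpos x hx
  have hMbarpd : Mbar.PosDef := .of_dotProduct_mulVec_pos hMbarh fun x hx => by
    have := hlow x
    have := hMpos x hx
    simp only [star_trivial]; linarith
  have hKpsd : K.PosSemidef := by
    have hKT : ∀ e, (Ke e)ᵀ = Ke e := fun e => by
      have := (hKe e).1
      rwa [IsHermitian, conjTranspose_eq_transpose_of_trivial] at this
    refine .of_dotProduct_mulVec_nonneg (hK ▸ assembled_herm σ Ke hKT) fun x => ?_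
    rw [star_trivial, hK, assembled_quad]
    refine Finset.sum_nonneg fun e _ => ?_
    simpa using (hKe e).dotProduct_mulVec_nonneg (fun j => x (σ e j))
  refine ⟨fun i => ?_, ?_⟩
  · have h1 : genEigs K Mbar i ≤ genEigs K M i := by
      simpa using genEigs_le K M Mbar hKpsd hMpd hMbarpd 1 hlow i
    have h2 : genEigs K M i ≤ c * genEigs K Mbar i :=
      genEigs_le K Mbar M hKpsd hMbarpd hMpd c hupp i
    refine ⟨⟨h1, h2⟩, fun h0 => ?_⟩
    have hs := Real.sqrt_pos.2 h0
    refine ⟨(one_le_div hs).2 (Real.sqrt_le_sqrt h1), (div_le_iff₀ hs).2 ?_⟩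
    rw [← Real.sqrt_mul hc0.le]
    exact Real.sqrt_le_sqrt h2
  · have a1 := sortedEigs_le Mbar M hMbarh hMh c hupp hc0.le (Fin.last n)
    have a2 := sortedEigs_le M Mbar hMh hMbarh 1 hlow zero_le_one 0
    rw [one_mul] at a2
    have p1 := sortedEigs_pos M hMpd 0
    have p2 := sortedEigs_pos M hMpd (Fin.last n)
    have hκ : 0 < specCond M := div_pos p2 p1
    rw [div_le_iff₀ hκ]
    unfold specCond
    rw [← mul_div_assoc]
    exact div_le_div₀ (by positivity) a1 p1 a2
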